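/- arXiv:2301.11415 — 3 statements merged into one kernel-verified Lean document; each statement's English description precedes it below -/
import Mathlib

section
/- Let T be the optimal Bellman operator (T V)(x) = min_{a ∈ A} ρ_x(ω ↦ c(x,a,ω) + γ·V(g(x,a,ω))) where A is a finite nonempty action set and each ρ_x is monotone and translation invariant. Then T is a γ-contraction in the supremum norm: for any two bounded functions V, V' : X → ℝ, sup_{x ∈ X} |(T V)(x) − (T V')(x)| ≤ γ · sup_{x ∈ X} |V(x) − V'(x)|. -/
/-!
Translation invariance lets a uniform error bound pass through a monotone `ρ x`, and infima are
stable under uniform perturbation. Discounting shrinks the error `V - V'` by `γ` before it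
enters `ρ x`.
-/

/-- Translation invariance (cash additivity) of a risk functional: adding a sure amount `r` to the
cost adds `r` to its risk. -/
def IsTranslationInvariant {Ω G : Type*} [Add G] (ρ : (Ω → G) → G) : Prop :=
  ∀ Z r, ρ (fun ω => Z ω + r) = ρ Z + r

section UniformPerturbation

variable {ι G : Type*} [AddCommGroup G]

theorem IsTranslationInvariant.abs_sub_le [LinearOrder G] [IsOrderedAddMonoid G]
    {ρ : (ι → G) → G} (hρ : IsTranslationInvariant ρ) (hmono : Monotone ρ)
    {Z Z' : ι → G} {r : G} (h : ∀ ω, |Z ω - Z' ω| ≤ r) : |ρ Z - ρ Z'| ≤ r := by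
  have le_add {Y Y' : ι → G} (hY : ∀ ω, Y ω - Y' ω ≤ r) : ρ Y ≤ r + ρ Y' :=
    calc
      ρ Y ≤ ρ (fun ω => Y' ω + r) := hmono fun ω => sub_le_iff_le_add'.1 (hY ω)
      _ = r + ρ Y' := by rw [hρ, add_comm]
  exact abs_sub_le_iff.2
    ⟨sub_le_iff_le_add.2 (le_add fun ω => (abs_sub_le_iff.1 (h ω)).1),
      sub_le_iff_le_add.2 (le_add fun ω => (abs_sub_le_iff.1 (h ω)).2)⟩

theorem bddAbove_range_abs_sub [LinearOrder G] [IsOrderedAddMonoid G] {f f' : ι → G}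
    (hf : ∃ M, ∀ i, |f i| ≤ M) (hf' : ∃ M, ∀ i, |f' i| ≤ M) :
    BddAbove (Set.range fun i => |f i - f' i|) := by
  obtain ⟨M, hM⟩ := hf
  obtain ⟨M', hM'⟩ := hf'
  exact ⟨M + M', Set.forall_mem_range.2 fun i =>
    (abs_sub (f i) (f' i)).trans (add_le_add (hM i) (hM' i))⟩

theorem bddBelow_range_of_sub_le [Preorder G] [AddLeftMono G] {f f' : ι → G} {r : G}
    (hf : BddBelow (Set.range f)) (h : ∀ i, f i - f' i ≤ r) : BddBelow (Set.range f') := by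
  obtain ⟨m, hm⟩ := hf
  exact ⟨m - r, Set.forall_mem_range.2 fun i =>
    sub_le_comm.1 ((sub_le_sub_right (hm ⟨i, rfl⟩) _).trans (h i))⟩

theorem ciInf_sub_ciInf_le [ConditionallyCompleteLattice G] [AddLeftMono G] [Nonempty ι]
    {f f' : ι → G} {r : G} (hf : BddBelow (Set.range f)) (h : ∀ i, f i - f' i ≤ r) :
    (⨅ i, f i) - ⨅ i, f' i ≤ r :=
  sub_le_comm.1 <| le_ciInf fun i =>
    (sub_le_sub_right (ciInf_le hf i) r).trans (sub_le_comm.1 (h i))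

theorem abs_ciInf_sub_ciInf_le [ConditionallyCompleteLinearOrder G] [IsOrderedAddMonoid G]
    [Nonempty ι] {f f' : ι → G} {r : G} (hf : BddBelow (Set.range f))
    (h : ∀ i, |f i - f' i| ≤ r) : |(⨅ i, f i) - ⨅ i, f' i| ≤ r := by
  have f_sub_le i : f i - f' i ≤ r := (abs_sub_le_iff.1 (h i)).1
  have f'_sub_le i : f' i - f i ≤ r := (abs_sub_le_iff.1 (h i)).2
  exact abs_sub_le_iff.2
    ⟨ciInf_sub_ciInf_le hf f_sub_le,
      ciInf_sub_ciInf_le (bddBelow_range_of_sub_le hf f_sub_le) f'_sub_le⟩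

end UniformPerturbation

section Bellman

variable {X Ω A : Type*} (g : X → A → Ω → X) (c : X → A → Ω → ℝ) (γ : ℝ) (ρ : X → (Ω → ℝ) → ℝ)

/-- The action value (`Q`-function) of `V`: the risk, assessed at `x`, of the cost of playing `a`
followed by the discounted value of the successor state. -/
def actionValue (V : X → ℝ) (x : X) (a : A) : ℝ :=
  ρ x fun ω => c x a ω + γ * V (g x a ω)

/-- The optimal Bellman operator, with an infimum over an arbitrary action set; this real infimum
takes the junk value `0` at states whose action values are not bounded below. -/
noncomputable def optimalBellman (V : X → ℝ) (x : X) : ℝ :=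
  ⨅ a, actionValue g c γ ρ V x a

variable {g c γ ρ} {V V' : X → ℝ} {D : ℝ}

theorem abs_actionValue_sub_le (hγ : 0 ≤ γ) {x : X} (hmono : Monotone (ρ x))
    (htrans : IsTranslationInvariant (ρ x)) (hD : ∀ y, |V y - V' y| ≤ D) (a : A) :
    |actionValue g c γ ρ V x a - actionValue g c γ ρ V' x a| ≤ γ * D := by
  refine htrans.abs_sub_le hmono fun ω => ?_
  rw [add_sub_add_left_eq_sub, ← mul_sub, abs_mul, abs_of_nonneg hγ]
  exact mul_le_mul_of_nonneg_left (hD _) hγ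

theorem abs_optimalBellman_sub_le [Nonempty A] (hγ : 0 ≤ γ) {x : X} (hmono : Monotone (ρ x))
    (htrans : IsTranslationInvariant (ρ x))
    (hV : BddBelow (Set.range (actionValue g c γ ρ V x))) (hD : ∀ y, |V y - V' y| ≤ D) :
    |optimalBellman g c γ ρ V x - optimalBellman g c γ ρ V' x| ≤ γ * D :=
  abs_ciInf_sub_ciInf_le hV (abs_actionValue_sub_le hγ hmono htrans hD)

theorem optimal_bellman_contraction_general [Nonempty X] [Nonempty A] (hγ : 0 ≤ γ)
    (hmono : ∀ x, Monotone (ρ x)) (htrans : ∀ x, IsTranslationInvariant (ρ x))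
    (hV : ∀ x, BddBelow (Set.range (actionValue g c γ ρ V x)))
    (hVV' : BddAbove (Set.range fun x => |V x - V' x|)) :
    ⨆ x, |optimalBellman g c γ ρ V x - optimalBellman g c γ ρ V' x| ≤ γ * ⨆ x, |V x - V' x| :=
  ciSup_le fun x => abs_optimalBellman_sub_le hγ (hmono x) (htrans x) (hV x) (le_ciSup hVV')

end Bellman

/-- The optimal Bellman operator
`(T V)(x) = min_{a ∈ A} ρ_x(ω ↦ c(x,a,ω) + γ·V(g(x,a,ω)))` over a finite nonempty
action set, with each `ρ_x` monotone and translation invariant, is a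
`γ`-contraction in the supremum norm. -/
theorem optimal_bellman_contraction {X Ω A : Type*} [Nonempty X] [Nonempty Ω]
    [Fintype A] [Nonempty A]
    (g : X → A → Ω → X) (c : X → A → Ω → ℝ) (hc : ∃ M, ∀ x a ω, |c x a ω| ≤ M)
    (γ : ℝ) (hγ0 : 0 ≤ γ) (hγ1 : γ < 1)
    (ρ : X → (Ω → ℝ) → ℝ)
    (hρmono : ∀ (x : X) (Z Z' : Ω → ℝ), (∀ ω, Z ω ≤ Z' ω) → ρ x Z ≤ ρ x Z')
    (hρtrans : ∀ (x : X) (Z : Ω → ℝ) (r : ℝ), ρ x (fun ω => Z ω + r) = ρ x Z + r)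
    (V V' : X → ℝ)
    (hV : ∃ M, ∀ x, |V x| ≤ M) (hV' : ∃ M, ∀ x, |V' x| ≤ M) :
    (⨆ x, |(⨅ a : A, ρ x (fun ω => c x a ω + γ * V (g x a ω))) -
        ⨅ a : A, ρ x (fun ω => c x a ω + γ * V' (g x a ω))|) ≤
      γ * ⨆ x, |V x - V' x| := by
  exact optimal_bellman_contraction_general hγ0 hρmono hρtrans
    (fun _ => (Set.finite_range _).bddBelow) (bddAbove_range_abs_sub hV hV')
end

section
/- The Bellman operator T of the infinite-horizon Bayesian risk MDP with CVaR risk measure, defined on bounded functions V : S × Δ(Θ) → ℝ by (T V)(s,μ) = min_{a ∈ A} ρ_μ(θ ↦ Σ_ξ f(θ,ξ)·(C(s,a,ξ) + γ·V(g(s,a,ξ), B(μ,ξ)))), maps bounded functions to bounded functions, is a γ-contraction in the supremum norm, and admits a unique bounded fixed point V* (the optimal value function), satisfying V* = T V*. -/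
open scoped BigOperators

noncomputable section

/-- Membership in the probability simplex `Δ(Θ)`. -/
def InSimplex {Θ : Type*} [Fintype Θ] (μ : Θ → ℝ) : Prop :=
  (∀ θ, 0 ≤ μ θ) ∧ ∑ θ, μ θ = 1

/-- Bayes update `B(μ,ξ)` of a belief `μ` after observing `ξ`, under the
parametric likelihood `f`; it is `μ` itself when the normalizing constant
is not positive. -/
def bayesUpdate {Θ Ξ : Type*} [Fintype Θ] (f : Θ → Ξ → ℝ)
    (μ : Θ → ℝ) (ξ : Ξ) : Θ → ℝ := by
  classical
  exact if 0 < ∑ θ', μ θ' * f θ' ξ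
    then fun θ => μ θ * f θ ξ / ∑ θ', μ θ' * f θ' ξ
    else μ

/-- The CVaR risk functional at level `α` of `Z : Θ → ℝ` under belief `μ`,
via the Rockafellar–Uryasev formula. -/
def cvarRisk {Θ : Type*} [Fintype Θ] (α : ℝ) (μ : Θ → ℝ) (Z : Θ → ℝ) : ℝ :=
  ⨅ φ : ℝ, φ + (1 - α)⁻¹ * ∑ θ, μ θ * max (Z θ - φ) 0

/-- The optimal Bellman operator of the infinite-horizon Bayesian risk MDP
with CVaR risk measure. -/
def brBellman {S A Θ Ξ : Type*} [Fintype Θ] [Fintype Ξ] [Fintype A] [Nonempty A]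
    (f : Θ → Ξ → ℝ) (g : S → A → Ξ → S) (C : S → A → Ξ → ℝ) (γ α : ℝ)
    (V : S → (Θ → ℝ) → ℝ) : S → (Θ → ℝ) → ℝ :=
  fun s μ => ⨅ a : A, cvarRisk α μ (fun θ =>
    ∑ ξ, f θ ξ * (C s a ξ + γ * V (g s a ξ) (bayesUpdate f μ ξ)))

/-!
CVaR is monotone and commutes with adding constants, because shifting `Z` by `c` shifts the
Rockafellar–Uryasev objective along `φ ↦ φ + c`; its infimum is finite since the objective
dominates the mean of `Z`. Hence a uniform perturbation of costs by `c` and of continuation values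
by `d` moves the Bellman operator by at most `c + γ * d`. Perturbing both from zero bounds the
operator, perturbing the values alone makes it a `γ`-contraction, and Banach's theorem on the
complete space of bounded functions gives the fixed point.
-/

namespace InSimplex

variable {ι : Type*} [Fintype ι] {w : ι → ℝ}

theorem sum_mul_add_const (hw : InSimplex w) (x : ι → ℝ) (c : ℝ) :
    ∑ i, w i * (x i + c) = ∑ i, w i * x i + c := by
  simp only [mul_add, Finset.sum_add_distrib, ← Finset.sum_mul, hw.2, one_mul]

theorem sum_mul_le_sum_mul_add (hw : InSimplex w) {x y : ι → ℝ} {c : ℝ}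
    (hxy : ∀ i, x i ≤ y i + c) : ∑ i, w i * x i ≤ ∑ i, w i * y i + c :=
  calc ∑ i, w i * x i ≤ ∑ i, w i * (y i + c) :=
        Finset.sum_le_sum fun i _ => mul_le_mul_of_nonneg_left (hxy i) (hw.1 i)
    _ = ∑ i, w i * y i + c := hw.sum_mul_add_const y c

theorem bayesUpdate {Ξ : Type*} {f : ι → Ξ → ℝ} {ξ : Ξ} (hw : InSimplex w)
    (hf : ∀ i, 0 ≤ f i ξ) : InSimplex (bayesUpdate f w ξ) := by
  unfold _root_.bayesUpdate
  split_ifs with hpos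
  · refine ⟨fun i => div_nonneg (mul_nonneg (hw.1 i) (hf i)) hpos.le, ?_⟩
    rw [← Finset.sum_div, div_self hpos.ne']
  · exact hw

end InSimplex

section CVaR

variable {Θ : Type*} [Fintype Θ] {α : ℝ} {μ : Θ → ℝ}

/-- The Rockafellar–Uryasev objective, whose infimum over `φ` is the CVaR `cvarRisk α μ Z`. -/
def cvarObjective (α : ℝ) (μ Z : Θ → ℝ) (φ : ℝ) : ℝ :=
  φ + (1 - α)⁻¹ * ∑ θ, μ θ * max (Z θ - φ) 0

theorem mean_le_cvarObjective (hα0 : 0 ≤ α) (hα1 : α < 1) (hμ : InSimplex μ) (Z : Θ → ℝ) (φ : ℝ) :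
    ∑ θ, μ θ * Z θ ≤ cvarObjective α μ Z φ := by
  have excess_nonneg : 0 ≤ ∑ θ, μ θ * max (Z θ - φ) 0 :=
    Finset.sum_nonneg fun θ _ => mul_nonneg (hμ.1 θ) (le_max_right _ _)
  have one_le_factor : 1 ≤ (1 - α)⁻¹ := (one_le_inv₀ (by linarith)).2 (by linarith)
  calc ∑ θ, μ θ * Z θ ≤ ∑ θ, μ θ * max (Z θ - φ) 0 + φ :=
        hμ.sum_mul_le_sum_mul_add fun θ => by linarith [le_max_left (Z θ - φ) 0]
    _ ≤ (1 - α)⁻¹ * ∑ θ, μ θ * max (Z θ - φ) 0 + φ := by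
        gcongr
        exact le_mul_of_one_le_left excess_nonneg one_le_factor
    _ = cvarObjective α μ Z φ := add_comm _ _

theorem bddBelow_range_cvarObjective (hα0 : 0 ≤ α) (hα1 : α < 1) (hμ : InSimplex μ) (Z : Θ → ℝ) :
    BddBelow (Set.range (cvarObjective α μ Z)) :=
  ⟨∑ θ, μ θ * Z θ, Set.forall_mem_range.2 (mean_le_cvarObjective hα0 hα1 hμ Z)⟩

theorem cvarObjective_mono (hα1 : α ≤ 1) (hμ : ∀ θ, 0 ≤ μ θ) {Z Z' : Θ → ℝ}
    (hZ : ∀ θ, Z θ ≤ Z' θ) (φ : ℝ) : cvarObjective α μ Z φ ≤ cvarObjective α μ Z' φ := by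
  unfold cvarObjective
  gcongr with θ
  · exact hμ θ
  · exact hZ θ

theorem cvarObjective_add_const (α : ℝ) (μ Z : Θ → ℝ) (c φ : ℝ) :
    cvarObjective α μ (fun θ => Z θ + c) (φ + c) = cvarObjective α μ Z φ + c := by
  simp only [cvarObjective, add_sub_add_right_eq_sub, add_right_comm]

theorem cvarRisk_mono (hα0 : 0 ≤ α) (hα1 : α < 1) (hμ : InSimplex μ) {Z Z' : Θ → ℝ}
    (hZ : ∀ θ, Z θ ≤ Z' θ) : cvarRisk α μ Z ≤ cvarRisk α μ Z' :=
  ciInf_mono (bddBelow_range_cvarObjective hα0 hα1 hμ Z) (cvarObjective_mono hα1.le hμ.1 hZ)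

theorem cvarRisk_add_const (hα0 : 0 ≤ α) (hα1 : α < 1) (hμ : InSimplex μ) (Z : Θ → ℝ) (c : ℝ) :
    cvarRisk α μ (fun θ => Z θ + c) = cvarRisk α μ Z + c :=
  calc cvarRisk α μ (fun θ => Z θ + c)
      = ⨅ φ, cvarObjective α μ (fun θ => Z θ + c) (φ + c) :=
        ((Equiv.addRight c).iInf_comp (g := cvarObjective α μ fun θ => Z θ + c)).symm
    _ = ⨅ φ, (cvarObjective α μ Z φ + c) := by simp only [cvarObjective_add_const]
    _ = cvarRisk α μ Z + c := (ciInf_add (bddBelow_range_cvarObjective hα0 hα1 hμ Z) c).symm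

theorem cvarRisk_le_cvarRisk_add (hα0 : 0 ≤ α) (hα1 : α < 1) (hμ : InSimplex μ)
    {Z Z' : Θ → ℝ} {c : ℝ} (hZ : ∀ θ, Z θ ≤ Z' θ + c) :
    cvarRisk α μ Z ≤ cvarRisk α μ Z' + c :=
  (cvarRisk_mono hα0 hα1 hμ hZ).trans_eq (cvarRisk_add_const hα0 hα1 hμ Z' c)

theorem cvarRisk_zero (hα0 : 0 ≤ α) (hα1 : α < 1) (hμ : InSimplex μ) :
    cvarRisk α μ (fun _ => 0) = 0 := by
  apply le_antisymm
  · refine ciInf_le_of_le (bddBelow_range_cvarObjective hα0 hα1 hμ _) 0 ?_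
    simp
  · refine le_ciInf fun φ => ?_
    have mean_le := mean_le_cvarObjective hα0 hα1 hμ (fun _ => 0) φ
    rwa [Finset.sum_eq_zero fun θ _ => mul_zero (μ θ)] at mean_le

end CVaR

section ValueFunctions

variable {S Θ : Type*} [Fintype Θ] {V V' : S → (Θ → ℝ) → ℝ}

/-- Boundedness of a value function on `S × Δ(Θ)`; values at non-beliefs are unconstrained. -/
def IsBoundedValue (V : S → (Θ → ℝ) → ℝ) : Prop :=
  ∃ M, ∀ s μ, InSimplex μ → |V s μ| ≤ M

/-- The supremum distance over `S × Δ(Θ)`; it takes the junk value `0` when some supremum is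
infinite, and is therefore only meaningful for value functions at bounded distance. -/
def valueDist (V V' : S → (Θ → ℝ) → ℝ) : ℝ :=
  ⨆ s, ⨆ μ : {μ : Θ → ℝ // InSimplex μ}, |V s μ.1 - V' s μ.1|

theorem valueDist_nonneg (V V' : S → (Θ → ℝ) → ℝ) : 0 ≤ valueDist V V' :=
  Real.iSup_nonneg fun _ => Real.iSup_nonneg fun _ => abs_nonneg _

theorem valueDist_le {d : ℝ} (hd : 0 ≤ d) (h : ∀ s μ, InSimplex μ → |V s μ - V' s μ| ≤ d) :
    valueDist V V' ≤ d :=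
  Real.iSup_le (fun s => Real.iSup_le (fun μ => h s μ.1 μ.2) hd) hd

theorem abs_sub_le_valueDist (hV : IsBoundedValue V) (hV' : IsBoundedValue V') (s : S)
    {μ : Θ → ℝ} (hμ : InSimplex μ) : |V s μ - V' s μ| ≤ valueDist V V' := by
  obtain ⟨M, hM⟩ := hV
  obtain ⟨M', hM'⟩ := hV'
  have gap_le (t : S) (ν : {ν : Θ → ℝ // InSimplex ν}) : |V t ν.1 - V' t ν.1| ≤ M + M' :=
    (abs_sub _ _).trans (add_le_add (hM t ν.1 ν.2) (hM' t ν.1 ν.2))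
  have : Nonempty {ν : Θ → ℝ // InSimplex ν} := ⟨⟨μ, hμ⟩⟩
  calc |V s μ - V' s μ| ≤ ⨆ ν : {ν : Θ → ℝ // InSimplex ν}, |V s ν.1 - V' s ν.1| :=
        le_ciSup (f := fun ν : {ν : Θ → ℝ // InSimplex ν} => |V s ν.1 - V' s ν.1|)
          ⟨M + M', Set.forall_mem_range.2 (gap_le s)⟩ ⟨μ, hμ⟩
    _ ≤ valueDist V V' :=
        le_ciSup (f := fun t => ⨆ ν : {ν : Θ → ℝ // InSimplex ν}, |V t ν.1 - V' t ν.1|)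
          ⟨M + M', Set.forall_mem_range.2 fun t => ciSup_le (gap_le t)⟩ s

end ValueFunctions

section Banach

open scoped BoundedContinuousFunction NNReal

theorem exists_bounded_fixedPoint_of_contraction_on {X : Type*} {D : Set X}
    {T : (X → ℝ) → X → ℝ} {γ : ℝ≥0} (hγ : γ < 1)
    (hbdd : ∀ V : X → ℝ, (∃ M, ∀ x ∈ D, |V x| ≤ M) → ∃ M, ∀ x ∈ D, |T V x| ≤ M)
    (hcontr : ∀ (V V' : X → ℝ) (d : ℝ), (∀ x ∈ D, |V x - V' x| ≤ d) →
      ∀ x ∈ D, |T V x - T V' x| ≤ γ * d) :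
    ∃ V : X → ℝ, (∃ M, ∀ x ∈ D, |V x| ≤ M) ∧ ∀ x ∈ D, T V x = V x := by
  -- With the discrete topology, `X →ᵇ ℝ` is the complete space of all bounded functions; cutting
  -- `T V` off outside `D` turns `T` into a self-map of it.
  let : TopologicalSpace X := ⊥
  have : DiscreteTopology X := ⟨rfl⟩
  have bounded_on (V : X →ᵇ ℝ) : ∃ M, ∀ x ∈ D, |V x| ≤ M := ⟨‖V‖, fun x _ => V.norm_coe_le_norm x⟩
  have cutoff_bounded (V : X →ᵇ ℝ) : ∃ M, ∀ x, ‖D.indicator (T V) x‖ ≤ M := by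
    obtain ⟨M, hM⟩ := hbdd V (bounded_on V)
    refine ⟨max M 0, fun x => ?_⟩
    by_cases hx : x ∈ D
    · simpa [hx] using Or.inl (hM x hx)
    · simp [hx]
  choose M hM using cutoff_bounded
  let cutoff (V : X →ᵇ ℝ) : X →ᵇ ℝ := .ofNormedAddCommGroupDiscrete (D.indicator (T V)) (M V) (hM V)
  have cutoff_eq (V : X →ᵇ ℝ) {x : X} (hx : x ∈ D) : cutoff V x = T V x :=
    Set.indicator_of_mem hx _
  have cutoff_contracting : ContractingWith γ cutoff := by
    refine ⟨hγ, LipschitzWith.of_dist_le_mul fun V V' => ?_⟩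
    refine (BoundedContinuousFunction.dist_le (by positivity)).2 fun x => ?_
    by_cases hx : x ∈ D
    · rw [cutoff_eq V hx, cutoff_eq V' hx]
      exact hcontr V V' _ (fun y _ => V.dist_coe_le_dist (g := V') y) x hx
    · have cutoff_off (W : X →ᵇ ℝ) : cutoff W x = 0 := Set.indicator_of_notMem hx _
      rw [cutoff_off, cutoff_off, dist_self]
      positivity
  let Vstar := cutoff_contracting.fixedPoint
  have hfix : cutoff Vstar = Vstar := cutoff_contracting.fixedPoint_isFixedPt
  exact ⟨Vstar, bounded_on Vstar, fun x hx => by rw [← cutoff_eq Vstar hx, hfix]⟩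

end Banach

section Bellman

variable {S A Θ Ξ : Type*} [Fintype A] [Nonempty A] [Fintype Θ] [Fintype Ξ]
  {f : Θ → Ξ → ℝ} {g : S → A → Ξ → S} {C C' : S → A → Ξ → ℝ} {γ α : ℝ}
  {V V' : S → (Θ → ℝ) → ℝ}

theorem brBellman_le_brBellman_add (hf : ∀ θ, InSimplex (f θ)) (hγ : 0 ≤ γ)
    (hα0 : 0 ≤ α) (hα1 : α < 1) {c d : ℝ} (hC : ∀ s a ξ, C s a ξ ≤ C' s a ξ + c)
    (hV : ∀ s μ, InSimplex μ → V s μ ≤ V' s μ + d) (s : S) {μ : Θ → ℝ} (hμ : InSimplex μ) :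
    brBellman f g C γ α V s μ ≤ brBellman f g C' γ α V' s μ + (c + γ * d) := by
  refine le_ciInf_add fun a => ciInf_le_of_le (Set.finite_range _).bddBelow a ?_
  refine cvarRisk_le_cvarRisk_add hα0 hα1 hμ fun θ => (hf θ).sum_mul_le_sum_mul_add fun ξ => ?_
  have posterior : InSimplex (bayesUpdate f μ ξ) := hμ.bayesUpdate fun θ => (hf θ).1 ξ
  have := mul_le_mul_of_nonneg_left (hV (g s a ξ) _ posterior) hγ
  linarith [hC s a ξ]

theorem abs_brBellman_sub_brBellman_le (hf : ∀ θ, InSimplex (f θ)) (hγ : 0 ≤ γ)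
    (hα0 : 0 ≤ α) (hα1 : α < 1) {c d : ℝ} (hC : ∀ s a ξ, |C s a ξ - C' s a ξ| ≤ c)
    (hV : ∀ s μ, InSimplex μ → |V s μ - V' s μ| ≤ d) (s : S) {μ : Θ → ℝ} (hμ : InSimplex μ) :
    |brBellman f g C γ α V s μ - brBellman f g C' γ α V' s μ| ≤ c + γ * d := by
  simp only [abs_sub_le_iff, sub_le_iff_le_add'] at hC hV ⊢
  exact ⟨brBellman_le_brBellman_add hf hγ hα0 hα1 (fun s a ξ => (hC s a ξ).1)
      (fun s μ hμ => (hV s μ hμ).1) s hμ,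
    brBellman_le_brBellman_add hf hγ hα0 hα1 (fun s a ξ => (hC s a ξ).2)
      (fun s μ hμ => (hV s μ hμ).2) s hμ⟩

theorem brBellman_zero_zero (f : Θ → Ξ → ℝ) (g : S → A → Ξ → S) (γ : ℝ)
    (hα0 : 0 ≤ α) (hα1 : α < 1) (s : S) {μ : Θ → ℝ} (hμ : InSimplex μ) :
    brBellman f g (fun _ _ _ => 0) γ α (fun _ _ => 0) s μ = 0 := by
  simp [brBellman, cvarRisk_zero hα0 hα1 hμ]

theorem IsBoundedValue.brBellman (hf : ∀ θ, InSimplex (f θ)) (hγ : 0 ≤ γ)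
    (hα0 : 0 ≤ α) (hα1 : α < 1) (hC : ∃ K, ∀ s a ξ, |C s a ξ| ≤ K) (hV : IsBoundedValue V) :
    IsBoundedValue (brBellman f g C γ α V) := by
  obtain ⟨K, hK⟩ := hC
  obtain ⟨M, hM⟩ := hV
  refine ⟨K + γ * M, fun s μ hμ => ?_⟩
  simpa only [brBellman_zero_zero f g γ hα0 hα1 s hμ, sub_zero] using
    abs_brBellman_sub_brBellman_le (g := g) (C' := fun _ _ _ => 0) (V' := fun _ _ => 0)
      hf hγ hα0 hα1 (by simpa using hK) (by simpa using hM) s hμ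

theorem abs_brBellman_sub_le_mul (hf : ∀ θ, InSimplex (f θ)) (hγ : 0 ≤ γ)
    (hα0 : 0 ≤ α) (hα1 : α < 1) {d : ℝ} (hV : ∀ s μ, InSimplex μ → |V s μ - V' s μ| ≤ d)
    (s : S) {μ : Θ → ℝ} (hμ : InSimplex μ) :
    |brBellman f g C γ α V s μ - brBellman f g C γ α V' s μ| ≤ γ * d := by
  simpa only [zero_add] using
    abs_brBellman_sub_brBellman_le (c := 0) hf hγ hα0 hα1 (by simp) hV s hμ

theorem valueDist_brBellman_le (hf : ∀ θ, InSimplex (f θ)) (hγ : 0 ≤ γ)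
    (hα0 : 0 ≤ α) (hα1 : α < 1) (hV : IsBoundedValue V) (hV' : IsBoundedValue V') :
    valueDist (brBellman f g C γ α V) (brBellman f g C γ α V') ≤ γ * valueDist V V' :=
  valueDist_le (mul_nonneg hγ (valueDist_nonneg V V')) fun s _ hμ =>
    abs_brBellman_sub_le_mul hf hγ hα0 hα1 (fun t _ hν => abs_sub_le_valueDist hV hV' t hν) s hμ

theorem exists_isBoundedValue_brBellman_eq (hf : ∀ θ, InSimplex (f θ)) (hγ0 : 0 ≤ γ) (hγ1 : γ < 1)
    (hα0 : 0 ≤ α) (hα1 : α < 1) (hC : ∃ K, ∀ s a ξ, |C s a ξ| ≤ K) :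
    ∃ V : S → (Θ → ℝ) → ℝ,
      IsBoundedValue V ∧ ∀ s μ, InSimplex μ → brBellman f g C γ α V s μ = V s μ := by
  lift γ to NNReal using hγ0
  obtain ⟨V, ⟨M, hM⟩, hfix⟩ := exists_bounded_fixedPoint_of_contraction_on
    (D := {p : S × (Θ → ℝ) | InSimplex p.2})
    (T := fun V p => brBellman f g C γ α (Function.curry V) p.1 p.2) hγ1
    (fun V ⟨M, hM⟩ => by
      obtain ⟨M', hM'⟩ := IsBoundedValue.brBellman (g := g) (V := Function.curry V)
        hf γ.2 hα0 hα1 hC ⟨M, fun s μ hμ => hM (s, μ) hμ⟩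
      exact ⟨M', fun p hp => hM' p.1 p.2 hp⟩)
    (fun V V' d hd p hp =>
      abs_brBellman_sub_le_mul hf γ.2 hα0 hα1 (fun s μ hμ => hd (s, μ) hμ) p.1 hp)
  exact ⟨Function.curry V, ⟨M, fun s μ hμ => hM (s, μ) hμ⟩, fun s μ hμ => hfix (s, μ) hμ⟩

theorem eq_of_brBellman_eq (hf : ∀ θ, InSimplex (f θ)) (hγ0 : 0 ≤ γ) (hγ1 : γ < 1)
    (hα0 : 0 ≤ α) (hα1 : α < 1) (hV : IsBoundedValue V) (hV' : IsBoundedValue V')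
    (hfix : ∀ s μ, InSimplex μ → brBellman f g C γ α V s μ = V s μ)
    (hfix' : ∀ s μ, InSimplex μ → brBellman f g C γ α V' s μ = V' s μ)
    (s : S) {μ : Θ → ℝ} (hμ : InSimplex μ) : V s μ = V' s μ := by
  have dist_eq : valueDist (brBellman f g C γ α V) (brBellman f g C γ α V') = valueDist V V' := by
    simp only [valueDist, hfix _ _ (Subtype.prop _), hfix' _ _ (Subtype.prop _)]
  have dist_le_mul : valueDist V V' ≤ γ * valueDist V V' :=
    dist_eq.symm.trans_le (valueDist_brBellman_le hf hγ0 hα0 hα1 hV hV')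
  have dist_nonpos : valueDist V V' ≤ 0 := by nlinarith
  exact sub_eq_zero.1 (abs_nonpos_iff.1 ((abs_sub_le_valueDist hV hV' s hμ).trans dist_nonpos))

theorem brBellman_contraction_unique_fixed_point_general
    (f : Θ → Ξ → ℝ) (hf : ∀ θ, InSimplex (f θ)) (g : S → A → Ξ → S)
    (C : S → A → Ξ → ℝ) (hC : ∃ K, ∀ s a ξ, |C s a ξ| ≤ K)
    (γ : ℝ) (hγ0 : 0 ≤ γ) (hγ1 : γ < 1) (α : ℝ) (hα0 : 0 ≤ α) (hα1 : α < 1) :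
    (∀ V : S → (Θ → ℝ) → ℝ, IsBoundedValue V → IsBoundedValue (brBellman f g C γ α V)) ∧
    (∀ V V' : S → (Θ → ℝ) → ℝ, IsBoundedValue V → IsBoundedValue V' →
      valueDist (brBellman f g C γ α V) (brBellman f g C γ α V') ≤ γ * valueDist V V') ∧
    (∃ Vstar : S → (Θ → ℝ) → ℝ, IsBoundedValue Vstar ∧
      (∀ s μ, InSimplex μ → brBellman f g C γ α Vstar s μ = Vstar s μ) ∧
      (∀ V : S → (Θ → ℝ) → ℝ, IsBoundedValue V →
        (∀ s μ, InSimplex μ → brBellman f g C γ α V s μ = V s μ) →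
        ∀ s μ, InSimplex μ → V s μ = Vstar s μ)) := by
  obtain ⟨Vstar, hVstar, hfix⟩ :=
    exists_isBoundedValue_brBellman_eq (g := g) hf hγ0 hγ1 hα0 hα1 hC
  exact ⟨fun V hV => hV.brBellman hf hγ0 hα0 hα1 hC,
    fun V V' hV hV' => valueDist_brBellman_le hf hγ0 hα0 hα1 hV hV',
    Vstar, hVstar, hfix, fun V hV hVfix s _ hμ =>
      eq_of_brBellman_eq hf hγ0 hγ1 hα0 hα1 hV hVstar hVfix hfix s hμ⟩

end Bellman

/-- The Bellman operator of the infinite-horizon Bayesian risk MDP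
with CVaR risk measure maps bounded functions to bounded functions, is a
`γ`-contraction in the supremum norm over `S × Δ(Θ)`, and admits a unique
bounded fixed point `V*` (the optimal value function). -/
theorem brBellman_contraction_unique_fixed_point
    {S A Θ Ξ : Type*} [Fintype S] [Nonempty S] [Fintype A] [Nonempty A]
    [Fintype Θ] [Nonempty Θ] [Fintype Ξ] [Nonempty Ξ]
    (f : Θ → Ξ → ℝ) (hf0 : ∀ θ ξ, 0 ≤ f θ ξ) (hf1 : ∀ θ, ∑ ξ, f θ ξ = 1)
    (g : S → A → Ξ → S) (C : S → A → Ξ → ℝ)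
    (γ : ℝ) (hγ0 : 0 ≤ γ) (hγ1 : γ < 1)
    (α : ℝ) (hα0 : 0 ≤ α) (hα1 : α < 1) :
    (∀ V : S → (Θ → ℝ) → ℝ,
        (∃ M, ∀ s μ, InSimplex μ → |V s μ| ≤ M) →
        ∃ M, ∀ s μ, InSimplex μ → |brBellman f g C γ α V s μ| ≤ M) ∧
    (∀ V V' : S → (Θ → ℝ) → ℝ,
        (∃ M, ∀ s μ, InSimplex μ → |V s μ| ≤ M) →
        (∃ M, ∀ s μ, InSimplex μ → |V' s μ| ≤ M) →
        (⨆ s, ⨆ μ : {μ : Θ → ℝ // InSimplex μ},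
            |brBellman f g C γ α V s μ.1 - brBellman f g C γ α V' s μ.1|) ≤
          γ * ⨆ s, ⨆ μ : {μ : Θ → ℝ // InSimplex μ}, |V s μ.1 - V' s μ.1|) ∧
    (∃ Vstar : S → (Θ → ℝ) → ℝ,
        (∃ M, ∀ s μ, InSimplex μ → |Vstar s μ| ≤ M) ∧
        (∀ s μ, InSimplex μ → brBellman f g C γ α Vstar s μ = Vstar s μ) ∧
        (∀ V : S → (Θ → ℝ) → ℝ,
          (∃ M, ∀ s μ, InSimplex μ → |V s μ| ≤ M) →
          (∀ s μ, InSimplex μ → brBellman f g C γ α V s μ = V s μ) →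
          ∀ s μ, InSimplex μ → V s μ = Vstar s μ)) := by
  obtain ⟨K, hK⟩ := (Set.finite_range fun p : S × A × Ξ => |C p.1 p.2.1 p.2.2|).bddAbove
  exact brBellman_contraction_unique_fixed_point_general f (fun θ => ⟨hf0 θ, hf1 θ⟩) g C
    ⟨K, fun s a ξ => hK ⟨(s, a, ξ), rfl⟩⟩ γ hγ0 hγ1 α hα0 hα1

end
end

section
/- Let X be a finite nonempty set, T a monotone γ-contraction on real-valued functions on X with fixed point V*, and α : X → ℝ with α(x) > 0 for all x and Σ_x α(x) = 1. Then V* is the unique optimal solution of the program max_V Σ_x α(x)·V(x) subject to V(x) ≤ (T V)(x) for all x ∈ X: every feasible V satisfies Σ_x α(x)·V(x) ≤ Σ_x α(x)·V*(x), V* itself is feasible, and any feasible V attaining Σ_x α(x)·V(x) = Σ_x α(x)·V*(x) equals V*. -/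
/-!
Monotonicity makes the iterates `T^[n] V` of a feasible `V` increase from `V`, and contraction makes
them converge to `V*`; hence `V ≤ V*`, so `V*` is the greatest feasible point. An objective which is
strictly increasing for the pointwise order, such as a sum with positive weights, therefore has `V*`
as its only maximizer on the feasible set.
-/

open Filter Function Topology
open scoped NNReal

section ContractionOrder

theorem le_of_tendsto_iterate_of_le_map {E : Type*} [TopologicalSpace E] [Preorder E]
    [ClosedIciTopology E] {T : E → E} {v w : E} (hmono : Monotone T) (hv : v ≤ T v)
    (hlim : Tendsto (fun n ↦ T^[n] v) atTop (𝓝 w)) : v ≤ w :=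
  ge_of_tendsto' hlim fun n ↦ hmono.monotone_iterate_of_le_map hv n.zero_le

variable {E : Type*} [MetricSpace E] {T : E → E} {K : ℝ≥0} {w : E}

theorem tendsto_iterate_of_contractingWith_of_isFixedPt (hT : ContractingWith K T)
    (hw : IsFixedPt T w) (v : E) : Tendsto (fun n ↦ T^[n] v) atTop (𝓝 w) := by
  have dist_iterate_le (n : ℕ) : dist (T^[n] v) w ≤ (K : ℝ) ^ n * dist v w := by
    simpa only [(hw.iterate n).eq, NNReal.coe_pow] using
      (hT.toLipschitzWith.iterate n).dist_le_mul v w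
  have bound_tendsto : Tendsto (fun n ↦ (K : ℝ) ^ n * dist v w) atTop (𝓝 0) := by
    simpa only [zero_mul] using
      (tendsto_pow_atTop_nhds_zero_of_lt_one K.coe_nonneg hT.1).mul_const (dist v w)
  exact tendsto_iff_dist_tendsto_zero.2 <|
    squeeze_zero (fun _ ↦ dist_nonneg) dist_iterate_le bound_tendsto

theorem isGreatest_setOf_le_map_of_contractingWith [Preorder E] [ClosedIciTopology E]
    (hT : ContractingWith K T) (hmono : Monotone T) (hw : IsFixedPt T w) :
    IsGreatest {v | v ≤ T v} w :=
  ⟨hw.eq.ge, fun v hv ↦ le_of_tendsto_iterate_of_le_map hmono hv <|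
    tendsto_iterate_of_contractingWith_of_isFixedPt hT hw v⟩

end ContractionOrder

theorem eq_of_isGreatest_of_strictMono {E β : Type*} [PartialOrder E] [Preorder β] {s : Set E}
    {v w : E} {φ : E → β} (hw : IsGreatest s w) (hφ : StrictMono φ) (hv : v ∈ s)
    (h : φ v = φ w) : v = w :=
  eq_of_le_of_not_lt (hw.2 hv) fun hlt ↦ (hφ hlt).ne h

section FiniteProducts

variable {ι : Type*} [Fintype ι]

theorem dist_pi_eq_iSup_dist {Y : ι → Type*} [∀ i, PseudoMetricSpace (Y i)] (f g : ∀ i, Y i) :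
    dist f g = ⨆ i, dist (f i) (g i) := by
  simp only [dist_pi_def, Finset.sup_univ_eq_ciSup, NNReal.coe_iSup, coe_nndist]

theorem contractingWith_of_iSup_dist_le {Y : ι → Type*} [∀ i, MetricSpace (Y i)]
    {T : (∀ i, Y i) → ∀ i, Y i} {K : ℝ≥0} (hK : K < 1)
    (h : ∀ f g, ⨆ i, dist (T f i) (T g i) ≤ K * ⨆ i, dist (f i) (g i)) : ContractingWith K T :=
  ⟨hK, .of_dist_le_mul fun f g ↦ by simpa only [dist_pi_eq_iSup_dist] using h f g⟩

theorem strictMono_sum_mul_of_pos {R : Type*} [Semiring R] [PartialOrder R]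
    [IsStrictOrderedRing R] {a : ι → R} (ha : ∀ i, 0 < a i) :
    StrictMono fun f : ι → R ↦ ∑ i, a i * f i := by
  intro f g hfg
  obtain ⟨hle, i, hlt⟩ := Pi.lt_def.1 hfg
  exact Fintype.sum_strictMono <| Pi.lt_def.2
    ⟨fun j ↦ mul_le_mul_of_nonneg_left (hle j) (ha j).le, i, mul_lt_mul_of_pos_left hlt (ha i)⟩

end FiniteProducts

theorem fixed_point_unique_lp_solution_general {E β : Type*} [MetricSpace E] [PartialOrder E]
    [ClosedIciTopology E] [Preorder β] {T : E → E} {K : ℝ≥0} (hT : ContractingWith K T)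
    (hmono : Monotone T) {w : E} (hw : IsFixedPt T w) {φ : E → β} (hφ : StrictMono φ) :
    (∀ v, v ≤ T v → φ v ≤ φ w) ∧ w ≤ T w ∧ ∀ v, v ≤ T v → φ v = φ w → v = w :=
  have greatest : IsGreatest {v | v ≤ T v} w :=
    isGreatest_setOf_le_map_of_contractingWith hT hmono hw
  ⟨fun _ hv ↦ hφ.monotone (greatest.2 hv), greatest.1,
    fun _ hv ↦ eq_of_isGreatest_of_strictMono greatest hφ hv⟩

/-- On a finite nonempty state space `X`, with `T` a monotone
`γ`-contraction with fixed point `V*` and strictly positive weights `α`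
summing to one, `V*` is the unique optimal solution of the program
`max_V Σ_x α(x)·V(x)` subject to `V ≤ T V` pointwise: every feasible `V` has
weighted sum at most that of `V*`, `V*` itself is feasible, and any feasible
`V` attaining the optimal weighted sum equals `V*`. -/
theorem fixed_point_unique_lp_solution {X : Type*} [Fintype X] [Nonempty X]
    (T : (X → ℝ) → (X → ℝ)) (γ : ℝ) (hγ0 : 0 ≤ γ) (hγ1 : γ < 1)
    (hmono : ∀ V V' : X → ℝ, (∀ x, V x ≤ V' x) → ∀ x, T V x ≤ T V' x)
    (hcontract : ∀ V V' : X → ℝ,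
      (⨆ x, |T V x - T V' x|) ≤ γ * ⨆ x, |V x - V' x|)
    (Vstar : X → ℝ) (hfix : T Vstar = Vstar)
    (α : X → ℝ) (hα0 : ∀ x, 0 < α x) (hα1 : ∑ x, α x = 1) :
    (∀ V : X → ℝ, (∀ x, V x ≤ T V x) → ∑ x, α x * V x ≤ ∑ x, α x * Vstar x) ∧
    (∀ x, Vstar x ≤ T Vstar x) ∧
    (∀ V : X → ℝ, (∀ x, V x ≤ T V x) →
      ∑ x, α x * V x = ∑ x, α x * Vstar x → V = Vstar) :=
  fixed_point_unique_lp_solution_general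
    (contractingWith_of_iSup_dist_le (K := ⟨γ, hγ0⟩) hγ1 hcontract) hmono hfix
    (strictMono_sum_mul_of_pos hα0)
end
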